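/- Let X and Y be pospaces and f : X → Y a dihomeomorphism. Then for every n ≥ 1, the natural homology functors H⃗_n(X;ℤ) : tpos(X) → Ab and H⃗_n(Y;ℤ) : tpos(Y) → Ab are bisimulation equivalent: the set of triples (⟨p⟩, H_{n−1}(f_*), ⟨f ∘ p⟩), where ⟨p⟩ ranges over all traces of X and H_{n−1}(f_*) is the isomorphism induced in homology by the homeomorphism of trace spaces q ↦ f ∘ q, is a bisimulation between them. -/

import Mathlib

open CategoryTheory

noncomputable section

/-- A reparametrization of the unit interval: continuous, monotone, fixing the endpoints. -/
def IsReparam (φ : unitInterval → unitInterval) : Prop :=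
  Continuous φ ∧ Monotone φ ∧ φ 0 = 0 ∧ φ 1 = 1

/-- Reparametrization equivalence of paths. -/
def ReparamEquiv {X : Type*} (f g : unitInterval → X) : Prop :=
  ∃ φ ψ : unitInterval → unitInterval, IsReparam φ ∧ IsReparam ψ ∧ f ∘ φ = g ∘ ψ

/-- A dipath in a pospace: a continuous monotone map `[0,1] → X`. -/
def IsDipath {X : Type*} [TopologicalSpace X] [Preorder X] (p : unitInterval → X) : Prop :=
  Continuous p ∧ Monotone p

/-- Concatenation of paths: `f` (rescaled) on `[0,1/2]`, `g` (rescaled) on `[1/2,1]`. -/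
def concatFun {X : Type*} (f g : unitInterval → X) : unitInterval → X :=
  fun t => if (t : ℝ) ≤ 1 / 2 then f (Set.projIcc 0 1 zero_le_one (2 * (t : ℝ)))
    else g (Set.projIcc 0 1 zero_le_one (2 * (t : ℝ) - 1))

/-- Traces: paths up to reparametrization equivalence. -/
def Trace (X : Type*) : Type _ := Quot (ReparamEquiv (X := X))

/-- The trace of a path. -/
def trc {X : Type*} (f : unitInterval → X) : Trace X := Quot.mk _ f

/-- The order on traces of a pospace: `⟨f⟩ ≤ ⟨g⟩` iff `⟨g⟩ = ⟨u⟩ ⋆ ⟨f⟩ ⋆ ⟨v⟩` for dipaths `u,v`. -/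
def TraceLE {X : Type*} [TopologicalSpace X] [PartialOrder X] (a b : Trace X) : Prop :=
  ∃ f u v : unitInterval → X,
    IsDipath f ∧ IsDipath u ∧ IsDipath v ∧
    u 1 = f 0 ∧ f 1 = v 0 ∧
    a = trc f ∧ b = trc (concatFun (concatFun u f) v)

/-- Traces of directed paths. -/
def IsDiTrace {X : Type*} [TopologicalSpace X] [PartialOrder X] (a : Trace X) : Prop :=
  ∃ f, IsDipath f ∧ a = trc f

/-- The trace poset `tpos(X)` of a pospace: traces of directed paths, ordered by extension. -/
def TPos (X : Type*) [TopologicalSpace X] [PartialOrder X] : Type _ :=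
  {a : Trace X // IsDiTrace a}

/-- The order of the trace poset. -/
def TPosLE {X : Type*} [TopologicalSpace X] [PartialOrder X] (a b : TPos X) : Prop :=
  TraceLE a.1 b.1

/-- Initial point of a trace. -/
def Trace.src {X : Type*} (a : Trace X) : X :=
  Quot.lift (fun f => f 0)
    (fun f g h => by
      obtain ⟨φ, ψ, hφ, hψ, hfg⟩ := h
      have h0 : f (φ 0) = g (ψ 0) := congrFun hfg 0
      rwa [hφ.2.2.1, hψ.2.2.1] at h0) a

/-- Terminal point of a trace. -/
def Trace.tgt {X : Type*} (a : Trace X) : X :=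
  Quot.lift (fun f => f 1)
    (fun f g h => by
      obtain ⟨φ, ψ, hφ, hψ, hfg⟩ := h
      have h1 : f (φ 1) = g (ψ 1) := congrFun hfg 1
      rwa [hφ.2.2.2, hψ.2.2.2] at h1) a

/-- The space of dipaths from `x` to `y`, with the compact-open topology. -/
abbrev DipathSpace (X : Type) [TopologicalSpace X] [Preorder X] (x y : X) : Type :=
  {p : C(unitInterval, X) // Monotone p ∧ p 0 = x ∧ p 1 = y}

/-- The trace space from `x` to `y`: dipaths modulo reparametrization, quotient topology. -/
abbrev TraceSpace (X : Type) [TopologicalSpace X] [Preorder X] (x y : X) : Type :=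
  Quot (fun p q : DipathSpace X x y => ReparamEquiv (p.1 : unitInterval → X) q.1)

/-- The `m`-th singular homology functor with coefficients in `R`. -/
def SingularH (R : Type) [CommRing R] (m : ℕ) : TopCat.{0} ⥤ ModuleCat.{0} R :=
  TopCat.toSSet ⋙ ((SimplicialObject.whiskering _ _).obj (ModuleCat.free R)) ⋙
    AlgebraicTopology.alternatingFaceMapComplex _ ⋙ HomologicalComplex.homologyFunctor _ _ m

/-- The object part of the natural homology diagram `H⃗_n(X;k)`:
the `(n-1)`-st singular homology of the trace space between the endpoints of a trace. -/
def Hobj (k : Type) [CommRing k] (m : ℕ) (X : Type) [TopologicalSpace X] [PartialOrder X]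
    (a : TPos X) : ModuleCat k :=
  (SingularH k m).obj (TopCat.of (TraceSpace X a.1.src a.1.tgt))

/-- Pushforward of traces along a map `e : X → Y`. -/
def Trace.push {X Y : Type} (e : X → Y) : Trace X → Trace Y :=
  Quot.map (fun p => e ∘ p) (fun f g h => by
    obtain ⟨φ, ψ, hφ, hψ, hfg⟩ := h
    exact ⟨φ, ψ, hφ, hψ, funext fun t => congrArg e (congrFun hfg t)⟩)

/-- Pushforward of dipath traces along a dihomeomorphism. -/
def TPos.push {X Y : Type} [TopologicalSpace X] [PartialOrder X]
    [TopologicalSpace Y] [PartialOrder Y]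
    (e : X ≃ₜ Y) (he : Monotone e) (a : TPos X) : TPos Y :=
  ⟨Trace.push e a.1, by
    obtain ⟨f, hf, hfa⟩ := a.2
    exact ⟨(e : X → Y) ∘ f, ⟨e.continuous.comp hf.1, he.comp hf.2⟩, by rw [hfa]; rfl⟩⟩

/-- A bisimulation between two (poset-indexed) diagrams of abelian groups (`ℤ`-modules),
following the definition for `Ab`-valued functors on small categories: a set of triples
`(a, η, b)` with `η : F a ≅ G b`, covering all objects on both sides, and such that morphisms
on either side can be matched by morphisms on the other, compatibly with the `η`'s. -/
def IsBisimRel {A B : Type*} (rA : A → A → Prop) (rB : B → B → Prop)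
    (FO : A → ModuleCat ℤ) (Fm : ∀ a a', rA a a' → (FO a ⟶ FO a'))
    (GO : B → ModuleCat ℤ) (Gm : ∀ b b', rB b b' → (GO b ⟶ GO b'))
    (R : Set (Σ a : A, Σ b : B, FO a ≅ GO b)) : Prop :=
  (∀ a : A, ∃ t ∈ R, t.1 = a) ∧
  (∀ b : B, ∃ t ∈ R, t.2.1 = b) ∧
  (∀ t ∈ R, ∀ (a' : A) (h : rA t.1 a'), ∃ t' ∈ R, ∃ (ha : t'.1 = a') (h' : rB t.2.1 t'.2.1),
    Fm t.1 a' h ≫ eqToHom (congrArg FO ha.symm) ≫ t'.2.2.hom = t.2.2.hom ≫ Gm _ _ h') ∧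
  (∀ t ∈ R, ∀ (b' : B) (h : rB t.2.1 b'), ∃ t' ∈ R, ∃ (hb : t'.2.1 = b') (h' : rA t.1 t'.1),
    Fm t.1 t'.1 h' ≫ t'.2.2.hom = t.2.2.hom ≫ Gm t.2.1 b' h ≫ eqToHom (congrArg GO hb.symm))

theorem IsReparam.surj {φ : unitInterval → unitInterval} (h : IsReparam φ) :
    Function.Surjective φ := by
  intro y
  have := intermediate_value_univ (0 : unitInterval) 1 h.1
  rw [h.2.2.1, h.2.2.2] at this
  exact this ⟨unitInterval.nonneg', unitInterval.le_one'⟩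

theorem ReparamEquiv.range_eq {X : Type*} {f g : unitInterval → X} (h : ReparamEquiv f g) :
    Set.range f = Set.range g := by
  obtain ⟨φ, ψ, hφ, hψ, hfg⟩ := h
  rw [← hφ.surj.range_comp f, ← hψ.surj.range_comp g, hfg]

/-- The image of a trace. -/
def Trace.im {X : Type*} (a : Trace X) : Set X :=
  Quot.lift (fun f => Set.range f) (fun _ _ h => ReparamEquiv.range_eq h) a

/-- Two dipaths with the same image in a pospace are reparametrization equivalent. -/
theorem reparamEquiv_of_range {X : Type*} [TopologicalSpace X] [PartialOrder X]
    [OrderClosedTopology X] {f g : unitInterval → X} (hf : IsDipath f) (hg : IsDipath g)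
    (h : Set.range f = Set.range g) : ReparamEquiv f g := by
  -- extend to the real line
  set F : ℝ → X := Set.IccExtend zero_le_one f with hF
  set G : ℝ → X := Set.IccExtend zero_le_one g with hG
  have Fm : Monotone F := hf.2.IccExtend _
  have Gm : Monotone G := hg.2.IccExtend _
  have Fc : Continuous F := hf.1.Icc_extend'
  have Gc : Continuous G := hg.1.Icc_extend'
  have total : ∀ s t, F s ≤ G t ∨ G t ≤ F s := by
    intro s t
    have : G t ∈ Set.range f := by rw [h]; exact ⟨_, rfl⟩
    obtain ⟨r, hr⟩ := this
    rw [← hr]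
    have hFs : F s = f (Set.projIcc 0 1 zero_le_one s) := rfl
    rw [hFs]
    exact (le_total (Set.projIcc 0 1 zero_le_one s) r).imp (fun h => hf.2 h) (fun h => hf.2 h)
  have F0 : ∀ t, F 0 ≤ G t := by
    intro t
    have : G t ∈ Set.range f := by rw [h]; exact ⟨_, rfl⟩
    obtain ⟨r, hr⟩ := this
    rw [← hr, hF, Set.IccExtend_left]
    exact hf.2 unitInterval.nonneg'
  have F1 : ∀ t, G t ≤ F 1 := by
    intro t
    have : G t ∈ Set.range f := by rw [h]; exact ⟨_, rfl⟩
    obtain ⟨r, hr⟩ := this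
    rw [← hr, hF, Set.IccExtend_right]
    exact hf.2 unitInterval.le_one'
  have G0 : ∀ t, G 0 ≤ F t := by
    intro t
    have : F t ∈ Set.range g := by rw [← h]; exact ⟨_, rfl⟩
    obtain ⟨r, hr⟩ := this
    rw [← hr, hG, Set.IccExtend_left]
    exact hg.2 unitInterval.nonneg'
  have G1 : ∀ t, F t ≤ G 1 := by
    intro t
    have : F t ∈ Set.range g := by rw [← h]; exact ⟨_, rfl⟩
    obtain ⟨r, hr⟩ := this
    rw [← hr, hG, Set.IccExtend_right]
    exact hg.2 unitInterval.le_one'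
  let S : ℝ → Set ℝ := fun τ => {s | s ∈ Set.Icc (0:ℝ) 1 ∧ τ - s ∈ Set.Icc (0:ℝ) 1 ∧ F s = G (τ - s)}
  have Sne : ∀ τ ∈ Set.Icc (0:ℝ) 2, (S τ).Nonempty := by
    rintro τ ⟨h0, h2⟩
    have hle : max 0 (τ - 1) ≤ min 1 τ :=
      max_le (le_min zero_le_one h0) (le_min (by linarith) (by linarith))
    have hcA : IsClosed {s : ℝ | F s ≤ G (τ - s)} :=
      isClosed_le Fc (Gc.comp (continuous_const.sub continuous_id))
    have hcB : IsClosed {s : ℝ | G (τ - s) ≤ F s} :=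
      isClosed_le (Gc.comp (continuous_const.sub continuous_id)) Fc
    have hpre : _root_.IsPreconnected (Set.Icc (max 0 (τ - 1)) (min 1 τ)) := isPreconnected_Icc
    rw [isPreconnected_closed_iff] at hpre
    obtain ⟨s, hs, h1, h2⟩ := hpre _ _ hcA hcB (fun s _ => total s (τ - s))
      ⟨max 0 (τ - 1), ⟨le_rfl, hle⟩, by
        rcases max_cases 0 (τ - 1) with h | h
        · rw [h.1]; exact F0 _
        · rw [h.1]
          have : τ - (τ - 1) = 1 := by ring
          simp only [Set.mem_setOf_eq, this]; exact G1 _⟩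
      ⟨min 1 τ, ⟨hle, le_rfl⟩, by
        rcases min_cases 1 τ with h | h
        · rw [h.1]; exact F1 _
        · rw [h.1]; simp only [Set.mem_setOf_eq, sub_self]; exact G0 _⟩
    have a1 := (max_le_iff.1 hs.1)
    have a2 := (le_min_iff.1 hs.2)
    exact ⟨s, ⟨a1.1, a2.1⟩, ⟨by linarith, by linarith⟩, le_antisymm h1 h2⟩
  have Scl : ∀ τ, IsClosed (S τ) := by
    intro τ
    have hc : Continuous fun s : ℝ => τ - s := continuous_const.sub continuous_id
    have := (isClosed_le Fc (Gc.comp hc)).inter (isClosed_le (Gc.comp hc) Fc)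
    convert (isClosed_Icc (a := (0:ℝ)) (b := 1)).inter
      (((isClosed_Icc (a := (0:ℝ)) (b := 1)).preimage hc).inter this) using 1
    ext s
    simp only [S, Set.mem_inter_iff, Set.mem_preimage, Set.mem_setOf_eq, Function.comp]
    constructor
    · rintro ⟨a, b, c⟩; exact ⟨a, b, c.le, c.ge⟩
    · rintro ⟨a, b, c, d⟩; exact ⟨a, b, le_antisymm c d⟩
  have Sbdd : ∀ τ, BddBelow (S τ) := fun τ => ⟨0, fun s hs => hs.1.1⟩
  let α : ℝ → ℝ := fun τ => sInf (S τ)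
  have αmem : ∀ τ ∈ Set.Icc (0:ℝ) 2, α τ ∈ S τ := fun τ hτ => (Scl τ).csInf_mem (Sne τ hτ) (Sbdd τ)
  have αle : ∀ τ s, s ∈ S τ → α τ ≤ s := fun τ s hs => csInf_le (Sbdd τ) hs
  have mono1 : ∀ τ ∈ Set.Icc (0:ℝ) 2, ∀ τ' ∈ Set.Icc (0:ℝ) 2, τ ≤ τ' → α τ ≤ α τ' := by
    intro τ hτ τ' hτ' hle
    by_contra! hlt
    obtain ⟨s1, t1, e1⟩ := αmem τ hτ
    obtain ⟨s2, t2, e2⟩ := αmem τ' hτ'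
    have c1 : F (α τ') ≤ F (α τ) := Fm hlt.le
    have c2 : G (τ - α τ) ≤ G (τ - α τ') := Gm (by linarith)
    have c3 : G (τ - α τ') ≤ G (τ' - α τ') := Gm (by linarith)
    have : α τ' ∈ S τ := ⟨s2, ⟨by linarith [t1.1], by linarith [t2.2]⟩,
      le_antisymm (c1.trans (e1.le.trans c2)) (c3.trans e2.ge)⟩
    exact absurd (αle _ _ this) (not_le.2 hlt)
  have mono2 : ∀ τ ∈ Set.Icc (0:ℝ) 2, ∀ τ' ∈ Set.Icc (0:ℝ) 2, τ ≤ τ' →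
      τ - α τ ≤ τ' - α τ' := by
    intro τ hτ τ' hτ' hle
    by_contra! hlt
    obtain ⟨s1, t1, e1⟩ := αmem τ hτ
    obtain ⟨s2, t2, e2⟩ := αmem τ' hτ'
    have c1 : F (α τ) ≤ F (τ' - (τ - α τ)) := Fm (by linarith)
    have c2 : F (τ' - (τ - α τ)) ≤ F (α τ') := Fm (by linarith)
    have c3 : G (τ' - α τ') ≤ G (τ - α τ) := Gm hlt.le
    have hx : τ' - (τ' - (τ - α τ)) = τ - α τ := by ring
    have : τ' - (τ - α τ) ∈ S τ' := by
      refine ⟨⟨by linarith [s1.1], by linarith [s2.2]⟩, ?_, ?_⟩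
      · rw [hx]; exact t1
      · rw [hx]; exact le_antisymm (c2.trans (e2.le.trans c3)) (e1.ge.trans c1)
    have := αle _ _ this
    linarith
  have h2mem : ∀ r : unitInterval, 2 * (r : ℝ) ∈ Set.Icc (0:ℝ) 2 := fun r =>
    ⟨by linarith [r.2.1], by linarith [r.2.2]⟩
  have lip1 : ∀ r r' : unitInterval, r ≤ r' → |α (2 * r) - α (2 * r')| ≤ 2 * |(r : ℝ) - r'| := by
    intro r r' hr
    have hr' : (r : ℝ) ≤ r' := hr
    have m1 := mono1 _ (h2mem r) _ (h2mem r') (by linarith)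
    have m2 := mono2 _ (h2mem r) _ (h2mem r') (by linarith)
    rw [abs_of_nonpos (by linarith), abs_of_nonpos (by linarith)]
    linarith
  have αc : Continuous fun r : unitInterval => α (2 * r) := by
    refine (LipschitzWith.of_dist_le_mul (K := 2) ?_).continuous
    intro r r'
    rw [Real.dist_eq, Subtype.dist_eq, Real.dist_eq]
    rcases le_total r r' with hr | hr
    · exact lip1 r r' hr
    · rw [abs_sub_comm, abs_sub_comm (r : ℝ)]; exact lip1 r' r hr
  refine ⟨fun r => ⟨α (2 * r), (αmem _ (h2mem r)).1⟩,
    fun r => ⟨2 * r - α (2 * r), (αmem _ (h2mem r)).2.1⟩,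
    ⟨αc.subtype_mk _, ?_, ?_, ?_⟩,
    ⟨((continuous_const.mul continuous_subtype_val).sub αc).subtype_mk _, ?_, ?_, ?_⟩, ?_⟩
  · intro r r' hr
    have hr' : (r : ℝ) ≤ r' := hr
    exact mono1 _ (h2mem r) _ (h2mem r') (by linarith)
  · have := αmem _ (h2mem 0)
    apply Subtype.ext
    have a := this.1.1
    have b := this.2.1.1
    simp only [Set.Icc.coe_zero] at *
    linarith
  · have := αmem _ (h2mem 1)
    apply Subtype.ext
    have a := this.1.2
    have b := this.2.1.2
    simp only [Set.Icc.coe_one] at *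
    linarith
  · intro r r' hr
    have hr' : (r : ℝ) ≤ r' := hr
    exact mono2 _ (h2mem r) _ (h2mem r') (by linarith)
  · have := αmem _ (h2mem 0)
    apply Subtype.ext
    have a := this.1.1
    have b := this.2.1.1
    simp only [Set.Icc.coe_zero] at *
    linarith
  · have := αmem _ (h2mem 1)
    apply Subtype.ext
    have a := this.1.2
    have b := this.2.1.2
    simp only [Set.Icc.coe_one] at *
    linarith
  · funext r
    have := (αmem _ (h2mem r))
    have e1 := this.2.2
    rw [hF, hG, Set.IccExtend_of_mem _ _ this.1, Set.IccExtend_of_mem _ _ this.2.1] at e1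
    exact e1

theorem concatFun_zero {X : Type*} (f g : unitInterval → X) : concatFun f g 0 = f 0 := by
  simp [concatFun]

theorem concatFun_one {X : Type*} (f g : unitInterval → X) : concatFun f g 1 = g 1 := by
  have h1 : ¬ ((1 : ℝ) ≤ 1 / 2) := by norm_num
  have h2 : (2 : ℝ) * 1 - 1 = 1 := by norm_num
  simp only [concatFun, Set.Icc.coe_one, if_neg h1, h2, Set.projIcc_right]
  rfl

theorem comp_concatFun {X Y : Type*} (e : X → Y) (f g : unitInterval → X) :
    e ∘ concatFun f g = concatFun (e ∘ f) (e ∘ g) := by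
  funext t
  simp only [concatFun, Function.comp]
  split_ifs <;> rfl

theorem IsDipath.concat {X : Type*} [TopologicalSpace X] [Preorder X] {f g : unitInterval → X}
    (hf : IsDipath f) (hg : IsDipath g) (h : f 1 = g 0) : IsDipath (concatFun f g) := by
  constructor
  · unfold concatFun
    refine Continuous.if_le ?_ ?_ continuous_subtype_val continuous_const ?_
    · exact hf.1.comp (continuous_projIcc.comp (by fun_prop))
    · exact hg.1.comp (continuous_projIcc.comp (by fun_prop))
    · intro t ht
      have h1 : (2 : ℝ) * t = 1 := by rw [ht]; norm_num
      rw [h1, sub_self, Set.projIcc_right, Set.projIcc_left]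
      exact h
  · intro s t hst
    have hst' : (s : ℝ) ≤ t := hst
    unfold concatFun
    split_ifs with h1 h2 h2
    · exact hf.2 (Set.monotone_projIcc _ (by linarith))
    · refine (hf.2 unitInterval.le_one').trans (h.le.trans (hg.2 unitInterval.nonneg'))
    · linarith
    · exact hg.2 (Set.monotone_projIcc _ (by linarith))

theorem range_concatFun {X : Type*} {f g : unitInterval → X} (h : f 1 = g 0) :
    Set.range (concatFun f g) = Set.range f ∪ Set.range g := by
  have key : ∀ r : unitInterval, f r ∈ Set.range (concatFun f g) := by
    intro r
    refine ⟨⟨r / 2, by linarith [r.2.1], by linarith [r.2.2]⟩, ?_⟩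
    have h1 : (r : ℝ) / 2 ≤ 1 / 2 := by linarith [r.2.2]
    have h2 : (2 : ℝ) * (r / 2) = r := by ring
    simp only [concatFun, if_pos h1, h2, Set.projIcc_val]
  apply Set.Subset.antisymm
  · rintro _ ⟨t, rfl⟩
    unfold concatFun
    split_ifs
    · exact Or.inl ⟨_, rfl⟩
    · exact Or.inr ⟨_, rfl⟩
  · rintro _ (⟨r, rfl⟩ | ⟨r, rfl⟩)
    · exact key r
    · by_cases hr : (r : ℝ) = 0
      · have : r = 0 := Subtype.ext hr
        rw [this, ← h]
        exact key 1
      · have hr0 : (0 : ℝ) < r := lt_of_le_of_ne r.2.1 (Ne.symm hr)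
        refine ⟨⟨(r + 1) / 2, by linarith [r.2.1], by linarith [r.2.2]⟩, ?_⟩
        have h1 : ¬ (((r : ℝ) + 1) / 2 ≤ 1 / 2) := by linarith
        have h2 : (2 : ℝ) * ((r + 1) / 2) - 1 = r := by ring
        simp only [concatFun, if_neg h1, h2, Set.projIcc_val]

theorem range_concat3 {X : Type*} {u f v : unitInterval → X} (h1 : u 1 = f 0) (h2 : f 1 = v 0) :
    Set.range (concatFun (concatFun u f) v) = Set.range u ∪ Set.range f ∪ Set.range v := by
  rw [range_concatFun (by rw [concatFun_one, h2]), range_concatFun h1]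

theorem IsDipath.concat3 {X : Type*} [TopologicalSpace X] [Preorder X] {u f v : unitInterval → X}
    (hu : IsDipath u) (hf : IsDipath f) (hv : IsDipath v) (h1 : u 1 = f 0) (h2 : f 1 = v 0) :
    IsDipath (concatFun (concatFun u f) v) :=
  (hu.concat hf h1).concat hv (by rw [concatFun_one, h2])

/-- The images of the extensions are determined by the image of the total trace. -/
theorem range_left {X : Type*} [TopologicalSpace X] [PartialOrder X] {u f v : unitInterval → X}
    (hu : IsDipath u) (hf : IsDipath f) (hv : IsDipath v) (h1 : u 1 = f 0) (h2 : f 1 = v 0) :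
    Set.range u = Set.range (concatFun (concatFun u f) v) ∩ Set.Iic (f 0) := by
  rw [range_concat3 h1 h2]
  apply Set.Subset.antisymm
  · rintro _ ⟨t, rfl⟩
    exact ⟨Or.inl (Or.inl ⟨t, rfl⟩), h1 ▸ hu.2 unitInterval.le_one'⟩
  · rintro _ ⟨(⟨t, rfl⟩ | ⟨t, rfl⟩) | ⟨t, rfl⟩, h⟩
    · exact ⟨t, rfl⟩
    · exact ⟨1, h1.trans (le_antisymm (hf.2 unitInterval.nonneg') h)⟩
    · have : f 0 ≤ v t := (hf.2 unitInterval.nonneg').trans (h2.le.trans (hv.2 unitInterval.nonneg'))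
      exact ⟨1, h1.trans (le_antisymm this h)⟩

theorem range_right {X : Type*} [TopologicalSpace X] [PartialOrder X] {u f v : unitInterval → X}
    (hu : IsDipath u) (hf : IsDipath f) (hv : IsDipath v) (h1 : u 1 = f 0) (h2 : f 1 = v 0) :
    Set.range v = Set.range (concatFun (concatFun u f) v) ∩ Set.Ici (f 1) := by
  rw [range_concat3 h1 h2]
  apply Set.Subset.antisymm
  · rintro _ ⟨t, rfl⟩
    exact ⟨Or.inr ⟨t, rfl⟩, h2.le.trans (hv.2 unitInterval.nonneg')⟩
  · rintro _ ⟨(⟨t, rfl⟩ | ⟨t, rfl⟩) | ⟨t, rfl⟩, h⟩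
    · have : u t ≤ f 1 := (hu.2 unitInterval.le_one').trans (h1.le.trans (hf.2 unitInterval.nonneg'))
      exact ⟨0, h2.symm.trans (le_antisymm h this)⟩
    · exact ⟨0, h2.symm.trans (le_antisymm h (hf.2 unitInterval.le_one'))⟩
    · exact ⟨t, rfl⟩

theorem Trace.push_src {X Y : Type} (e : X → Y) (a : Trace X) : (a.push e).src = e a.src := by
  induction a using Quot.ind; rfl

theorem Trace.push_tgt {X Y : Type} (e : X → Y) (a : Trace X) : (a.push e).tgt = e a.tgt := by
  induction a using Quot.ind; rfl

theorem Trace.push_im {X Y : Type} (e : X → Y) (a : Trace X) : (a.push e).im = e '' a.im := by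
  induction a using Quot.ind; exact Set.range_comp _ _

theorem TraceLE.push {X Y : Type} [TopologicalSpace X] [PartialOrder X]
    [TopologicalSpace Y] [PartialOrder Y] {e : X → Y} (hc : Continuous e) (he : Monotone e)
    {a b : Trace X} (h : TraceLE a b) : TraceLE (a.push e) (b.push e) := by
  obtain ⟨f, u, v, hf, hu, hv, h1, h2, rfl, rfl⟩ := h
  refine ⟨e ∘ f, e ∘ u, e ∘ v, ⟨hc.comp hf.1, he.comp hf.2⟩, ⟨hc.comp hu.1, he.comp hu.2⟩,
    ⟨hc.comp hv.1, he.comp hv.2⟩, congrArg e h1, congrArg e h2, rfl, ?_⟩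
  rw [← comp_concatFun, ← comp_concatFun]
  rfl

theorem Trace.push_push {X Y : Type} {e : X → Y} {d : Y → X} (h : ∀ x, d (e x) = x)
    (a : Trace X) : (a.push e).push d = a := by
  induction a using Quot.ind with
  | mk f => exact congrArg (Quot.mk _) (funext fun t => h (f t))

/-- The commuting square of trace spaces. -/
theorem trace_square
    {X : Type} [TopologicalSpace X] [PartialOrder X]
    {Y : Type} [TopologicalSpace Y] [PartialOrder Y] [OrderClosedTopology Y]
    (e : X ≃ₜ Y) (he : Monotone e) (he' : Monotone e.symm) (a b : TPos X)
    (gX : TopCat.of (TraceSpace X a.1.src a.1.tgt) ⟶ TopCat.of (TraceSpace X b.1.src b.1.tgt))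
    (u v : unitInterval → X) (hu : IsDipath u) (hv : IsDipath v)
    (hX : ∃ f : unitInterval → X, IsDipath f ∧ u 1 = f 0 ∧ f 1 = v 0 ∧
          a.1 = trc f ∧ b.1 = trc (concatFun (concatFun u f) v))
    (hgX : ∀ (p : DipathSpace X a.1.src a.1.tgt) (q : DipathSpace X b.1.src b.1.tgt),
          ReparamEquiv (q.1 : unitInterval → X)
            (concatFun (concatFun u (p.1 : unitInterval → X)) v) →
          gX (Quot.mk _ p) = Quot.mk _ q)
    (gY : TopCat.of (TraceSpace Y (TPos.push e he a).1.src (TPos.push e he a).1.tgt) ⟶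
      TopCat.of (TraceSpace Y (TPos.push e he b).1.src (TPos.push e he b).1.tgt))
    (u' v' : unitInterval → Y) (hu' : IsDipath u') (hv' : IsDipath v')
    (hY : ∃ f : unitInterval → Y, IsDipath f ∧ u' 1 = f 0 ∧ f 1 = v' 0 ∧
          (TPos.push e he a).1 = trc f ∧
          (TPos.push e he b).1 = trc (concatFun (concatFun u' f) v'))
    (hgY : ∀ (p : DipathSpace Y (TPos.push e he a).1.src (TPos.push e he a).1.tgt)
          (q : DipathSpace Y (TPos.push e he b).1.src (TPos.push e he b).1.tgt),
          ReparamEquiv (q.1 : unitInterval → Y)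
            (concatFun (concatFun u' (p.1 : unitInterval → Y)) v') →
          gY (Quot.mk _ p) = Quot.mk _ q)
    (ga : TopCat.of (TraceSpace X a.1.src a.1.tgt) ⟶
          TopCat.of (TraceSpace Y (TPos.push e he a).1.src (TPos.push e he a).1.tgt))
    (hga : ∀ (p : DipathSpace X a.1.src a.1.tgt)
           (q : DipathSpace Y (TPos.push e he a).1.src (TPos.push e he a).1.tgt),
          (q.1 : unitInterval → Y) = (e : X → Y) ∘ (p.1 : unitInterval → X) →
          ga (Quot.mk _ p) = Quot.mk _ q)
    (gb : TopCat.of (TraceSpace X b.1.src b.1.tgt) ⟶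
          TopCat.of (TraceSpace Y (TPos.push e he b).1.src (TPos.push e he b).1.tgt))
    (hgb : ∀ (p : DipathSpace X b.1.src b.1.tgt)
           (q : DipathSpace Y (TPos.push e he b).1.src (TPos.push e he b).1.tgt),
          (q.1 : unitInterval → Y) = (e : X → Y) ∘ (p.1 : unitInterval → X) →
          gb (Quot.mk _ p) = Quot.mk _ q) :
    gX ≫ gb = ga ≫ gY := by
  obtain ⟨f, hf, h1, h2, haf, hbf⟩ := hX
  obtain ⟨f', hf', h1', h2', haf', hbf'⟩ := hY
  have lle : ∀ x y, e x ≤ e y ↔ x ≤ y := fun x y =>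
    ⟨fun h => by simpa using he' h, fun h => he h⟩
  have asrc : a.1.src = f 0 := by rw [haf]; rfl
  have atgt : a.1.tgt = f 1 := by rw [haf]; rfl
  have bsrc : b.1.src = u 0 := by rw [hbf]; exact (concatFun_zero _ _).trans (concatFun_zero _ _)
  have btgt : b.1.tgt = v 1 := by rw [hbf]; exact concatFun_one _ _
  have bim : b.1.im = Set.range (concatFun (concatFun u f) v) := by rw [hbf]; rfl
  have asrc' : e a.1.src = f' 0 := by
    exact (Trace.push_src e a.1).symm.trans (congrArg Trace.src haf')
  have atgt' : e a.1.tgt = f' 1 := by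
    exact (Trace.push_tgt e a.1).symm.trans (congrArg Trace.tgt haf')
  have bim' : e '' b.1.im = Set.range (concatFun (concatFun u' f') v') := by
    exact (Trace.push_im e b.1).symm.trans (congrArg Trace.im hbf')
  have hru : Set.range u' = e '' Set.range u := by
    rw [range_left hu hf hv h1 h2, range_left hu' hf' hv' h1' h2', ← bim, ← bim', ← asrc, ← asrc']
    ext y
    constructor
    · rintro ⟨⟨x, hx, rfl⟩, h⟩
      exact ⟨x, ⟨hx, (lle _ _).1 h⟩, rfl⟩
    · rintro ⟨x, ⟨hx, h⟩, rfl⟩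
      exact ⟨⟨x, hx, rfl⟩, he h⟩
  have hrv : Set.range v' = e '' Set.range v := by
    rw [range_right hu hf hv h1 h2, range_right hu' hf' hv' h1' h2', ← bim, ← bim', ← atgt, ← atgt']
    ext y
    constructor
    · rintro ⟨⟨x, hx, rfl⟩, h⟩
      exact ⟨x, ⟨hx, (lle _ _).1 h⟩, rfl⟩
    · rintro ⟨x, ⟨hx, h⟩, rfl⟩
      exact ⟨⟨x, hx, rfl⟩, he h⟩
  apply TopCat.hom_ext
  apply ContinuousMap.ext
  intro z
  change gb (gX z) = gY (ga z)
  obtain ⟨p, rfl⟩ := Quot.exists_rep z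
  have hp : IsDipath (p.1 : unitInterval → X) := ⟨p.1.continuous, p.2.1⟩
  have k1 : u 1 = p.1 0 := by rw [p.2.2.1, asrc, h1]
  have k2 : p.1 1 = v 0 := by rw [p.2.2.2, atgt, h2]
  have hq := hu.concat3 hp hv k1 k2
  let q : DipathSpace X b.1.src b.1.tgt :=
    ⟨⟨concatFun (concatFun u p.1) v, hq.1⟩, hq.2,
      by change concatFun (concatFun u p.1) v 0 = _; rw [concatFun_zero, concatFun_zero, bsrc],
      by change concatFun (concatFun u p.1) v 1 = _; rw [concatFun_one, btgt]⟩
  let ep : DipathSpace Y (TPos.push e he a).1.src (TPos.push e he a).1.tgt :=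
    ⟨⟨e ∘ p.1, e.continuous.comp p.1.continuous⟩, he.comp p.2.1,
      (congrArg e p.2.2.1).trans (Trace.push_src e a.1).symm,
      (congrArg e p.2.2.2).trans (Trace.push_tgt e a.1).symm⟩
  let eq : DipathSpace Y (TPos.push e he b).1.src (TPos.push e he b).1.tgt :=
    ⟨⟨e ∘ q.1, e.continuous.comp q.1.continuous⟩, he.comp q.2.1,
      (congrArg e q.2.2.1).trans (Trace.push_src e b.1).symm,
      (congrArg e q.2.2.2).trans (Trace.push_tgt e b.1).symm⟩
  have hep : IsDipath (e ∘ p.1 : unitInterval → Y) := ⟨ep.1.continuous, ep.2.1⟩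
  have k1' : u' 1 = (e ∘ p.1) 0 := by
    rw [h1', ← asrc']; exact congrArg e p.2.2.1.symm
  have k2' : (e ∘ p.1) 1 = v' 0 := by
    rw [← h2', ← atgt']; exact congrArg e p.2.2.2
  have hxq : gX (Quot.mk _ p) = Quot.mk _ q :=
    hgX p q ⟨id, id, ⟨continuous_id, monotone_id, rfl, rfl⟩, ⟨continuous_id, monotone_id, rfl, rfl⟩, rfl⟩
  have hR : ReparamEquiv (eq.1 : unitInterval → Y) (concatFun (concatFun u' (ep.1)) v') := by
    refine reparamEquiv_of_range ⟨eq.1.continuous, eq.2.1⟩ (hu'.concat3 hep hv' k1' k2') ?_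
    change Set.range (e ∘ concatFun (concatFun u p.1) v) =
      Set.range (concatFun (concatFun u' (e ∘ p.1)) v')
    rw [Set.range_comp, range_concat3 k1 k2, range_concat3 k1' k2', hru, hrv, Set.range_comp,
      Set.image_union, Set.image_union]
  rw [hxq, hgb q eq rfl, hga p ep rfl, hgY ep eq hR]

/-- Let `X` and `Y` be pospaces and `e : X → Y` a dihomeomorphism (a
homeomorphism which is an order isomorphism).  Then for every `n ≥ 1` the natural homology
functors `H⃗_n(X;ℤ) : tpos(X) → Ab` and `H⃗_n(Y;ℤ) : tpos(Y) → Ab` are bisimulation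
equivalent: the set of triples `(⟨p⟩, H_{n-1}(e_*), ⟨e ∘ p⟩)`, where `⟨p⟩` ranges over all
traces of `X` and `H_{n-1}(e_*)` is the isomorphism induced in homology by the homeomorphism of
trace spaces `q ↦ e ∘ q`, is a bisimulation between them.  The natural homology functors are
presented by their object parts `Hobj` (defined concretely above) and their map parts
`HmapX, HmapY`, characterized as being induced in singular homology by concatenation with the
extensions; the isomorphisms `η a` are characterized as being induced by `q ↦ e ∘ q`. -/
theorem natural_homologies_of_dihomeomorphic_pospaces_are_bisimilar
    (n : ℕ) (hn : 1 ≤ n)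
    (X : Type) [TopologicalSpace X] [PartialOrder X] [T2Space X] [OrderClosedTopology X]
    (Y : Type) [TopologicalSpace Y] [PartialOrder Y] [T2Space Y] [OrderClosedTopology Y]
    -- a dihomeomorphism from X to Y
    (e : X ≃ₜ Y) (he : Monotone e) (he' : Monotone e.symm)
    -- the map part of the natural homology functor H⃗_n(X;ℤ) ...
    (HmapX : ∀ a b : TPos X, TPosLE a b → (Hobj ℤ (n - 1) X a ⟶ Hobj ℤ (n - 1) X b))
    (HmapY : ∀ a b : TPos Y, TPosLE a b → (Hobj ℤ (n - 1) Y a ⟶ Hobj ℤ (n - 1) Y b))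
    -- ... functorial ...
    (hidX : ∀ (a : TPos X) (h : TPosLE a a), HmapX a a h = 𝟙 _)
    (hcompX : ∀ (a b c : TPos X) (hab : TPosLE a b) (hbc : TPosLE b c) (hac : TPosLE a c),
      HmapX a c hac = HmapX a b hab ≫ HmapX b c hbc)
    (hidY : ∀ (a : TPos Y) (h : TPosLE a a), HmapY a a h = 𝟙 _)
    (hcompY : ∀ (a b c : TPos Y) (hab : TPosLE a b) (hbc : TPosLE b c) (hac : TPosLE a c),
      HmapY a c hac = HmapY a b hab ≫ HmapY b c hbc)
    -- ... and induced in homology by concatenation with the extensions: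
    (hindX : ∀ (a b : TPos X) (h : TPosLE a b),
      ∃ (g : TopCat.of (TraceSpace X a.1.src a.1.tgt) ⟶ TopCat.of (TraceSpace X b.1.src b.1.tgt))
        (u v : unitInterval → X), IsDipath u ∧ IsDipath v ∧
        (∃ f : unitInterval → X, IsDipath f ∧ u 1 = f 0 ∧ f 1 = v 0 ∧
          a.1 = trc f ∧ b.1 = trc (concatFun (concatFun u f) v)) ∧
        (∀ (p : DipathSpace X a.1.src a.1.tgt) (q : DipathSpace X b.1.src b.1.tgt),
          ReparamEquiv (q.1 : unitInterval → X)
            (concatFun (concatFun u (p.1 : unitInterval → X)) v) →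
          g (Quot.mk _ p) = Quot.mk _ q) ∧
        HmapX a b h = (SingularH ℤ (n - 1)).map g)
    (hindY : ∀ (a b : TPos Y) (h : TPosLE a b),
      ∃ (g : TopCat.of (TraceSpace Y a.1.src a.1.tgt) ⟶ TopCat.of (TraceSpace Y b.1.src b.1.tgt))
        (u v : unitInterval → Y), IsDipath u ∧ IsDipath v ∧
        (∃ f : unitInterval → Y, IsDipath f ∧ u 1 = f 0 ∧ f 1 = v 0 ∧
          a.1 = trc f ∧ b.1 = trc (concatFun (concatFun u f) v)) ∧
        (∀ (p : DipathSpace Y a.1.src a.1.tgt) (q : DipathSpace Y b.1.src b.1.tgt),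
          ReparamEquiv (q.1 : unitInterval → Y)
            (concatFun (concatFun u (p.1 : unitInterval → Y)) v) →
          g (Quot.mk _ p) = Quot.mk _ q) ∧
        HmapY a b h = (SingularH ℤ (n - 1)).map g)
    -- the isomorphisms induced in homology by the homeomorphisms of trace spaces `q ↦ e ∘ q`:
    (η : ∀ a : TPos X, Hobj ℤ (n - 1) X a ≅ Hobj ℤ (n - 1) Y (TPos.push e he a))
    (hη : ∀ a : TPos X,
      ∃ g : TopCat.of (TraceSpace X a.1.src a.1.tgt) ⟶
          TopCat.of (TraceSpace Y (TPos.push e he a).1.src (TPos.push e he a).1.tgt),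
        (∀ (p : DipathSpace X a.1.src a.1.tgt)
           (q : DipathSpace Y (TPos.push e he a).1.src (TPos.push e he a).1.tgt),
          (q.1 : unitInterval → Y) = (e : X → Y) ∘ (p.1 : unitInterval → X) →
          g (Quot.mk _ p) = Quot.mk _ q) ∧
        (η a).hom = (SingularH ℤ (n - 1)).map g) :
    -- conclusion: the set of triples `(a, η a, e_*(a))` is a bisimulation between the
    -- natural homology functors of X and Y
    IsBisimRel TPosLE TPosLE (Hobj ℤ (n - 1) X) HmapX (Hobj ℤ (n - 1) Y) HmapY
      {t | ∃ a : TPos X, t = ⟨a, TPos.push e he a, η a⟩} := by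
  have square : ∀ (a b : TPos X) (h : TPosLE a b)
      (h' : TPosLE (TPos.push e he a) (TPos.push e he b)),
      HmapX a b h ≫ (η b).hom = (η a).hom ≫ HmapY _ _ h' := by
    intro a b h h'
    obtain ⟨gX, u, v, hu, hv, hX, hgX, eX⟩ := hindX a b h
    obtain ⟨gY, u', v', hu', hv', hY, hgY, eY⟩ := hindY _ _ h'
    obtain ⟨ga, hga, ea⟩ := hη a
    obtain ⟨gb, hgb, eb⟩ := hη b
    have := trace_square e he he' a b gX u v hu hv hX hgX gY u' v' hu' hv' hY hgY ga hga gb hgb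
    rw [eX, eY, ea, eb]
    exact ((SingularH ℤ (n - 1)).map_comp gX gb).symm.trans
      ((congrArg (SingularH ℤ (n - 1)).map this).trans ((SingularH ℤ (n - 1)).map_comp ga gY))
  have hsurj : ∀ b : TPos Y, ∃ a : TPos X, TPos.push e he a = b := fun b =>
    ⟨TPos.push e.symm he' b, Subtype.ext (Trace.push_push (fun y => e.apply_symm_apply y) b.1)⟩
  have hrefl : ∀ a b : TPos X, TPosLE (TPos.push e he a) (TPos.push e he b) → TPosLE a b := by
    intro a b h
    have h2 : TraceLE ((a.1.push e).push e.symm) ((b.1.push e).push e.symm) :=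
      TraceLE.push e.symm.continuous he' h
    rwa [Trace.push_push (fun x => e.symm_apply_apply x),
      Trace.push_push (fun x => e.symm_apply_apply x)] at h2
  refine ⟨fun a => ⟨_, ⟨a, rfl⟩, rfl⟩, fun b => ?_, ?_, ?_⟩
  · obtain ⟨a, ha⟩ := hsurj b
    exact ⟨_, ⟨a, rfl⟩, ha⟩
  · rintro t ⟨a, rfl⟩ a' h
    refine ⟨_, ⟨a', rfl⟩, rfl, TraceLE.push e.continuous he h, ?_⟩
    rw [eqToHom_refl, Category.id_comp]
    exact square a a' h _
  · rintro t ⟨a, rfl⟩ b' h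
    obtain ⟨a', rfl⟩ := hsurj b'
    refine ⟨_, ⟨a', rfl⟩, rfl, hrefl a a' h, ?_⟩
    rw [eqToHom_refl, Category.comp_id]
    exact square a a' _ h

end
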